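/- Let P = {(u_1, u_2) ∈ ℝ² : u_1 ≥ 0, u_2 ≥ 0, 2 − u_1 + u_2 ≥ 0, 5 − u_2 ≥ 0, 1 + u_1 − u_2 ≥ 0} (the moment polytope of a two-point blowup of ℂP²), with normal vectors v_1 = (1,0), v_2 = (0,1), v_3 = (−1,1), v_4 = (0,−1), v_5 = (1,−1) and l_1(u) = u_1, l_2(u) = u_2, l_3(u) = 2 − u_1 + u_2, l_4(u) = 5 − u_2, l_5(u) = 1 + u_1 − u_2. Then Trop(P, (1,0)) ∩ Trop(P, (0,1)) = {(t, t − 1/2) : 2 ≤ t ≤ 4} ∪ {(1, 1)} as subsets of ℝ². -/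

import Mathlib

open scoped Classical

noncomputable section

/-- Integer inner product `⟨w, v⟩ = ∑ i, w i * v i` on `ℤ^n`. -/
def zdot {n : ℕ} (w v : Fin n → ℤ) : ℤ := ∑ i, w i * v i

/-- A lattice vector is primitive if the gcd of its entries is `1`. -/
def Primitive {n : ℕ} (w : Fin n → ℤ) : Prop := Finset.univ.gcd w = 1

/-- The affine function `l_j(u) = ⟨u, v_j⟩ - λ_j`. -/
def lf {n m : ℕ} (v : Fin m → Fin n → ℤ) (lam : Fin m → ℝ) (j : Fin m) (u : Fin n → ℝ) : ℝ :=
  (∑ i, u i * (v j i : ℝ)) - lam j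

/-- The polytope `P = {u : l_j(u) ≥ 0 for all j}`. -/
def Pset {n m : ℕ} (v : Fin m → Fin n → ℤ) (lam : Fin m → ℝ) : Set (Fin n → ℝ) :=
  {u | ∀ j, 0 ≤ lf v lam j u}

/-- The tropicalization of `P` relative to the lattice vector `w`: the set of points at which
the minimum of `{l_j(u) : ⟨w, v_j⟩ ≠ 0}` is attained by at least two distinct indices. -/
def TropRel {n m : ℕ} (v : Fin m → Fin n → ℤ) (lam : Fin m → ℝ) (w : Fin n → ℤ) :
    Set (Fin n → ℝ) :=
  {u | ∃ j₁ j₂ : Fin m, j₁ ≠ j₂ ∧ zdot w (v j₁) ≠ 0 ∧ zdot w (v j₂) ≠ 0 ∧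
        lf v lam j₁ u = lf v lam j₂ u ∧
        ∀ j : Fin m, zdot w (v j) ≠ 0 → lf v lam j₁ u ≤ lf v lam j u}

/-- Normal vectors of the moment polytope of a two-point blowup of `ℂP²`:
`v₁ = (1,0), v₂ = (0,1), v₃ = (-1,1), v₄ = (0,-1), v₅ = (1,-1)`. -/
def vC : Fin 5 → Fin 2 → ℤ := ![![1, 0], ![0, 1], ![-1, 1], ![0, -1], ![1, -1]]

/-- Constants so that `l₁ = u₁, l₂ = u₂, l₃ = 2 - u₁ + u₂, l₄ = 5 - u₂, l₅ = 1 + u₁ - u₂`. -/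
def lamC : Fin 5 → ℝ := ![0, 0, -2, -5, -1]

/-- Pairwise form of the tropicalization relative to `(1,0)`. -/
lemma trop_one (x y : ℝ) (h : ![x, y] ∈ TropRel vC lamC ![1, 0]) :
    (x = 2 - x + y ∧ x ≤ 1 + x - y) ∨ (x = 1 + x - y ∧ x ≤ 2 - x + y) ∨
      (2 - x + y = 1 + x - y ∧ 2 - x + y ≤ x) := by
  obtain ⟨i, j, hij, hi, hj, he, hm⟩ := h
  have h0 := hm 0
  have h2 := hm 2
  have h4 := hm 4
  clear hm
  fin_cases i <;> fin_cases j <;>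
    simp [zdot, lf, vC, lamC, Fin.sum_univ_two] at hij hi hj he h0 h2 h4 <;>
    first
    | (left; constructor <;> linarith)
    | (right; left; constructor <;> linarith)
    | (right; right; constructor <;> linarith)

lemma trop_two (x y : ℝ) (h : ![x, y] ∈ TropRel vC lamC ![0, 1]) :
    ¬ (y < 2 - x + y ∧ y < 5 - y ∧ y < 1 + x - y) ∧
    ¬ (5 - y < y ∧ 5 - y < 2 - x + y ∧ 5 - y < 1 + x - y) ∧
    ¬ (1 + x - y < y ∧ 1 + x - y < 2 - x + y ∧ 1 + x - y < 5 - y) := by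
  obtain ⟨i, j, hij, hi, hj, he, hm⟩ := h
  have h1 := hm 1
  have h2 := hm 2
  have h3 := hm 3
  have h4 := hm 4
  clear hm
  refine ⟨?_, ?_, ?_⟩ <;> rintro ⟨a, b, c⟩ <;> fin_cases i <;> fin_cases j <;>
    simp [zdot, lf, vC, lamC, Fin.sum_univ_two] at hij hi hj he h1 h2 h3 h4 <;>
    linarith

/-- For the moment polytope
`P = {u : u₁ ≥ 0, u₂ ≥ 0, 2 - u₁ + u₂ ≥ 0, 5 - u₂ ≥ 0, 1 + u₁ - u₂ ≥ 0}` of a two-point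
blowup of `ℂP²`,
`Trop(P,(1,0)) ∩ Trop(P,(0,1)) = {(t, t - 1/2) : 2 ≤ t ≤ 4} ∪ {(1,1)}` as subsets of `ℝ²`. -/
theorem statement15 :
    TropRel vC lamC ![1, 0] ∩ TropRel vC lamC ![0, 1]
    = {u : Fin 2 → ℝ | ∃ t : ℝ, 2 ≤ t ∧ t ≤ 4 ∧ u = ![t, t - 1/2]} ∪ {![1, 1]} := by
  ext u
  obtain ⟨x, y, rfl⟩ : ∃ x y : ℝ, u = ![x, y] :=
    ⟨u 0, u 1, by ext i; fin_cases i <;> rfl⟩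
  constructor
  · rintro ⟨h, h'⟩
    obtain ⟨n1, n2, n3⟩ := trop_two x y h'
    rcases trop_one x y h with ⟨a, b⟩ | ⟨a, b⟩ | ⟨a, b⟩
    · exact (n1 ⟨by linarith, by linarith, by linarith⟩).elim
    · right
      have hy : y = 1 := by linarith
      subst hy
      have hx : x = 1 := by
        rcases lt_trichotomy x 1 with hx | hx | hx
        · exact (n3 ⟨by linarith, by linarith, by linarith⟩).elim
        · exact hx
        · exact (n1 ⟨by linarith, by linarith, by linarith⟩).elim
      subst hx
      rfl
    · left
      have hy : y = x - 1 / 2 := by linarith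
      refine ⟨x, ?_, ?_, by rw [hy]⟩
      · by_contra! hx
        exact n1 ⟨by linarith, by linarith, by linarith⟩
      · by_contra! hx
        exact n2 ⟨by linarith, by linarith, by linarith⟩
  · rintro (⟨t, h2, h4, hu⟩ | hu)
    · rw [hu]
      constructor
      · refine ⟨2, 4, by decide, by simp [zdot, vC], by simp [zdot, vC], ?_, ?_⟩
        · simp [lf, vC, lamC, Fin.sum_univ_two]; linarith
        · intro j hj
          fin_cases j <;> simp [zdot, lf, vC, lamC, Fin.sum_univ_two] at hj ⊢ <;> linarith
      · refine ⟨2, 4, by decide, by simp [zdot, vC], by simp [zdot, vC], ?_, ?_⟩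
        · simp [lf, vC, lamC, Fin.sum_univ_two]; linarith
        · intro j hj
          fin_cases j <;> simp [zdot, lf, vC, lamC, Fin.sum_univ_two] at hj ⊢ <;> linarith
    · rw [Set.mem_singleton_iff.mp hu]
      constructor
      · refine ⟨0, 4, by decide, by simp [zdot, vC], by simp [zdot, vC], ?_, ?_⟩
        · simp [lf, vC, lamC, Fin.sum_univ_two]
        · intro j hj
          fin_cases j <;> simp [zdot, lf, vC, lamC, Fin.sum_univ_two] at hj ⊢ <;> norm_num
      · refine ⟨1, 4, by decide, by simp [zdot, vC], by simp [zdot, vC], ?_, ?_⟩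
        · simp [lf, vC, lamC, Fin.sum_univ_two]
        · intro j hj
          fin_cases j <;> simp [zdot, lf, vC, lamC, Fin.sum_univ_two] at hj ⊢ <;> norm_num
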